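/- A symmetric matrix P = (ρ_{ij}) ∈ [−1,1]^{d×d} with unit diagonal is the correlation matrix of some random vector with Bern(1/2) margins if and only if there exist α_1,…,α_{2^{d−1}} ≥ 0 satisfying the 1 + d(d−1)/2 linear equations α_1 + ⋯ + α_{2^{d−1}} = 1 and Σ_{l=1}^{2^{d−1}} α_l·1{b_i(l) = b_j(l)} = (ρ_{ij} + 1)/2 for all 1 ≤ i < j ≤ d, where b(l) ∈ {0,1}^d denotes the binary expansion of l defined by l = 1 + Σ_{j=1}^d b_j(l)·2^{d−j}. -/

import Mathlib

open MeasureTheory ProbabilityTheory Set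

noncomputable section

/-- The uniform distribution on (0,1). -/
def unif01 : Measure ℝ := volume.restrict (Set.Ioo (0:ℝ) 1)

/-- Pearson's correlation coefficient of two real random variables. -/
def pearson {Ω : Type*} [MeasurableSpace Ω] (μ : Measure Ω) (Y1 Y2 : Ω → ℝ) : ℝ :=
  ((∫ ω, Y1 ω * Y2 ω ∂μ) - (∫ ω, Y1 ω ∂μ) * (∫ ω, Y2 ω ∂μ)) /
    Real.sqrt (variance Y1 μ * variance Y2 μ)

/-- The distribution function (CDF) of a measure on ℝ. -/
def cdfOf (ν : Measure ℝ) : ℝ → ℝ := fun x => (ν (Set.Iic x)).toReal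

/-- The quantile function (generalized inverse) of a distribution function. -/
def quantileFn (G : ℝ → ℝ) (p : ℝ) : ℝ := sInf {x : ℝ | p ≤ G x}

/-- A distribution on ℝ is symmetric (about some point `m`). -/
def SymmetricDist (G : Measure ℝ) : Prop :=
  ∃ m : ℝ, G.map (fun x => 2 * m - x) = G

/-- A distribution on ℝ is non-degenerate: it is not a point mass. -/
def Nondegenerate (G : Measure ℝ) : Prop := ∀ c : ℝ, G ≠ Measure.dirac c

/-- A distribution is concordance inducing: non-degenerate, symmetric,
with finite second moment. -/
def ConcordanceInducing (G : Measure ℝ) : Prop :=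
  Nondegenerate G ∧ SymmetricDist G ∧ Integrable (fun x : ℝ => x ^ 2) G

/-- `corrSet ν d` is the set of `d×d` Pearson correlation matrices of random vectors
all of whose margins have distribution `ν`. -/
def corrSet (ν : Measure ℝ) (d : ℕ) : Set (Matrix (Fin d) (Fin d) ℝ) :=
  {P | ∃ μ : Measure (Fin d → ℝ), IsProbabilityMeasure μ ∧
        (∀ j, μ.map (fun x => x j) = ν) ∧
        (∀ i j, P i j = pearson μ (fun x => x i) (fun x => x j))}

/-- The Bernoulli distribution `Bern(p)` on ℝ. -/
def bern (p : ℝ) : Measure ℝ :=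
  ENNReal.ofReal p • Measure.dirac (1:ℝ) + ENNReal.ofReal (1 - p) • Measure.dirac (0:ℝ)

/-- The set of `d×d` correlation matrices of random vectors with `Bern(1/2)` margins. -/
def PBd (d : ℕ) : Set (Matrix (Fin d) (Fin d) ℝ) := corrSet (bern (1/2)) d

/-- The set of all `d×d` correlation matrices: symmetric positive semi-definite
matrices with entries in `[-1,1]` and unit diagonal. -/
def Pd (d : ℕ) : Set (Matrix (Fin d) (Fin d) ℝ) :=
  {P | P.IsSymm ∧ (∀ i j, P i j ∈ Set.Icc (-1:ℝ) 1) ∧ P.PosSemidef ∧ ∀ i, P i i = 1}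

/-- The `i`-th digit of the binary expansion `b(l)` determined by
`l = 1 + Σ_{j=1}^d b_j 2^{d−j}`; here the argument is `l − 1`,
ranging over `{0, …, 2^{d−1} − 1}`. -/
def bbit (d : ℕ) (l : ℕ) (i : Fin d) : Bool := l.testBit (d - 1 - (i : ℕ))

lemma bern_half_eq : bern (1/2) =
    ENNReal.ofReal (1/2) • (Measure.dirac (0:ℝ) + Measure.dirac (1:ℝ)) := by
  unfold bern
  rw [smul_add, add_comm]
  norm_num

lemma integral_bern_half (f : ℝ → ℝ) : ∫ x, f x ∂(bern (1/2)) = (f 0 + f 1) / 2 := by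
  rw [bern_half_eq, integral_smul_measure, integral_add_measure
    (integrable_dirac (by simp)) (integrable_dirac (by simp)), integral_dirac, integral_dirac,
    ENNReal.toReal_ofReal (by norm_num), smul_eq_mul]
  ring

lemma ae_bern_half : ∀ᵐ x ∂(bern (1/2)), x = 0 ∨ x = 1 := by
  rw [bern_half_eq]
  refine Measure.ae_smul_measure ?_ _
  rw [ae_add_measure_iff]
  constructor
  · rw [ae_dirac_eq]; simp
  · rw [ae_dirac_eq]; simp

section margins
variable {d : ℕ} {μ : Measure (Fin d → ℝ)}

lemma marg_integral (h : ∀ j, μ.map (fun x => x j) = bern (1/2)) (j : Fin d)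
    (f : ℝ → ℝ) (hf : Measurable f) : ∫ x, f (x j) ∂μ = (f 0 + f 1) / 2 := by
  rw [← integral_bern_half, ← h j, integral_map (measurable_pi_apply j).aemeasurable
    hf.aestronglyMeasurable]

lemma marg_ae (h : ∀ j, μ.map (fun x => x j) = bern (1/2)) :
    ∀ᵐ x ∂μ, ∀ j, x j = 0 ∨ x j = 1 := by
  rw [ae_all_iff]
  intro j
  refine ae_of_ae_map (f := fun x : Fin d → ℝ => x j)
    (p := fun y => y = 0 ∨ y = 1) (measurable_pi_apply j).aemeasurable ?_
  rw [h j]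
  exact ae_bern_half

lemma marg_var [IsProbabilityMeasure μ]
    (h : ∀ j, μ.map (fun x => x j) = bern (1/2)) (j : Fin d) :
    variance (fun x => x j) μ = 1/4 := by
  rw [variance_eq_integral (measurable_pi_apply j).aemeasurable]
  have h1 := marg_integral h j (fun x => x) measurable_id
  rw [h1, marg_integral h j (fun x => (x - (0+1)/2)^2) (by fun_prop)]
  norm_num

lemma marg_pearson [IsProbabilityMeasure μ]
    (h : ∀ j, μ.map (fun x => x j) = bern (1/2)) (i j : Fin d) :
    pearson μ (fun x => x i) (fun x => x j) = 4 * (∫ x, x i * x j ∂μ) - 1 := by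
  unfold pearson
  rw [marg_var h i, marg_var h j, marg_integral h i (fun x => x) measurable_id,
    marg_integral h j (fun x => x) measurable_id, Real.sqrt_mul_self (by norm_num)]
  ring

lemma marg_integrable [IsProbabilityMeasure μ]
    (h : ∀ j, μ.map (fun x => x j) = bern (1/2)) (f : (Fin d → ℝ) → ℝ) (hf : Measurable f)
    (hb : ∀ x : Fin d → ℝ, (∀ j, x j = 0 ∨ x j = 1) → |f x| ≤ 1) : Integrable f μ := by
  refine Integrable.of_bound hf.aestronglyMeasurable 1 ?_
  filter_upwards [marg_ae h] with x hx
  exact hb x hx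

lemma marg_agree [IsProbabilityMeasure μ]
    (h : ∀ j, μ.map (fun x => x j) = bern (1/2)) (i j : Fin d) :
    ∫ x, (if x i = x j then (1:ℝ) else 0) ∂μ
      = (pearson μ (fun x => x i) (fun x => x j) + 1) / 2 := by
  have hi : Integrable (fun x : Fin d → ℝ => x i) μ :=
    marg_integrable h _ (by fun_prop) (fun x hx => by rcases hx i with e | e <;> simp [e])
  have hj : Integrable (fun x : Fin d → ℝ => x j) μ :=
    marg_integrable h _ (by fun_prop) (fun x hx => by rcases hx j with e | e <;> simp [e])
  have hij : Integrable (fun x : Fin d → ℝ => x i * x j) μ :=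
    marg_integrable h _ (by fun_prop) (fun x hx => by
      rcases hx i with e | e <;> rcases hx j with e' | e' <;> simp [e, e'])
  have e : ∫ x, (if x i = x j then (1:ℝ) else 0) ∂μ
      = ∫ x, ((1 - x i - x j) + 2 * (x i * x j)) ∂μ := by
    refine integral_congr_ae ?_
    filter_upwards [marg_ae h] with x hx
    rcases hx i with e | e <;> rcases hx j with e' | e' <;> simp [e, e'] <;> norm_num
  have h1 : Integrable (fun _ : Fin d → ℝ => (1:ℝ)) μ := integrable_const _
  have h2 : Integrable (fun x : Fin d → ℝ => 1 - x i) μ := h1.sub hi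
  have h3 : Integrable (fun x : Fin d → ℝ => 1 - x i - x j) μ := h2.sub hj
  rw [e, integral_add h3 (hij.const_mul 2), integral_sub h2 hj,
    integral_sub h1 hi, integral_const_mul, marg_pearson h,
    marg_integral h i (fun x => x) measurable_id, marg_integral h j (fun x => x) measurable_id]
  simp
  ring

end margins

/-- The index of the sign pattern of `x` relative to `x 0`. -/
def patIdx (n : ℕ) (x : Fin (n+1) → ℝ) : Fin (2^(n+1-1)) :=
  ⟨Nat.ofBits (fun k : Fin n => if x ⟨n - k, by omega⟩ = x 0 then false else true),
    Nat.ofBits_lt_two_pow _⟩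

lemma patIdx_bit (n : ℕ) (x : Fin (n+1) → ℝ) (i : Fin (n+1)) :
    bbit (n+1) (patIdx n x : ℕ) i = if x i = x 0 then false else true := by
  unfold bbit patIdx
  simp only [Nat.add_sub_cancel]
  by_cases h0 : i = 0
  · subst h0
    rw [Nat.testBit_ofBits_ge _ _ (by simp)]
    simp
  · have hi : (i:ℕ) ≠ 0 := fun h => h0 (Fin.ext h)
    rw [Nat.testBit_ofBits_lt _ _ (by omega)]
    have : (⟨n - (n - (i:ℕ)), by omega⟩ : Fin (n+1)) = i := Fin.ext (by simp; omega)
    simp only [this]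

lemma patIdx_measurable (n : ℕ) : Measurable (patIdx n) := by
  have h1 : Measurable (fun (x : Fin (n+1) → ℝ) (k : Fin n) =>
      if x ⟨n - k, by omega⟩ = x 0 then false else true) := by
    refine measurable_pi_lambda _ (fun k => ?_)
    refine Measurable.ite ?_ measurable_const measurable_const
    exact measurableSet_eq_fun (measurable_pi_apply _) (measurable_pi_apply _)
  have h2 : Measurable (fun f : Fin n → Bool =>
      (⟨Nat.ofBits f, Nat.ofBits_lt_two_pow _⟩ : Fin (2^(n+1-1)))) := measurable_of_finite _
  exact h2.comp h1

lemma fwd (n : ℕ) (P : Matrix (Fin (n+1)) (Fin (n+1)) ℝ) (hP : P ∈ PBd (n+1)) :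
      ∃ α : Fin (2^(n+1-1)) → ℝ, (∀ l, 0 ≤ α l) ∧ (∑ l, α l = 1) ∧
        ∀ i j : Fin (n+1), i < j →
          (∑ l, α l * (if bbit (n+1) (l : ℕ) i = bbit (n+1) (l : ℕ) j then (1:ℝ) else 0))
            = (P i j + 1) / 2 := by
  obtain ⟨μ, hμ, hm, hp⟩ := hP
  have hmeas := patIdx_measurable n
  have : IsProbabilityMeasure (μ.map (patIdx n)) := Measure.isProbabilityMeasure_map
    hmeas.aemeasurable
  have key : ∀ f : Fin (2^(n+1-1)) → ℝ,
      ∑ l, (μ.map (patIdx n)).real {l} * f l = ∫ x, f (patIdx n x) ∂μ := by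
    intro f
    rw [← integral_map (f := f) hmeas.aemeasurable
      (measurable_of_finite f).aestronglyMeasurable, integral_fintype Integrable.of_finite]
    simp
  refine ⟨fun l => (μ.map (patIdx n)).real {l}, fun l => measureReal_nonneg, ?_, ?_⟩
  · simp
  · intro i j _
    rw [key (fun l => if bbit (n+1) (l : ℕ) i = bbit (n+1) (l : ℕ) j then (1:ℝ) else 0),
      hp, ← marg_agree hm]
    refine integral_congr_ae ?_
    filter_upwards [marg_ae hm] with x hx
    rw [patIdx_bit, patIdx_bit]
    rcases hx i with e | e <;> rcases hx j with e' | e' <;> rcases hx 0 with e0 | e0 <;>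
      simp [e, e', e0]

/-- The 0-1 vector of a bit string, possibly complemented. -/
def bvec (d l : ℕ) (c : Bool) : Fin d → ℝ := fun i => if bbit d l i = c then 1 else 0

lemma bwd (d : ℕ) (P : Matrix (Fin d) (Fin d) ℝ) (α : Fin (2^(d-1)) → ℝ)
    (h0 : ∀ l, 0 ≤ α l) (h1 : ∑ l, α l = 1)
    (h : ∀ i j : Fin d,
      (∑ l, α l * (if bbit d (l : ℕ) i = bbit d (l : ℕ) j then (1:ℝ) else 0))
            = (P i j + 1) / 2) : P ∈ PBd d := by
  let ν : Fin (2^(d-1)) → Measure (Fin d → ℝ) := fun l =>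
    ENNReal.ofReal (α l) • (ENNReal.ofReal (1/2) •
      (Measure.dirac (bvec d l true) + Measure.dirac (bvec d l false)))
  have hs : ∑ l, ENNReal.ofReal (α l) = 1 := by
    rw [← ENNReal.ofReal_sum_of_nonneg (fun l _ => h0 l), h1, ENNReal.ofReal_one]
  have hm : ∀ j, (∑ l, ν l).map (fun x => x j) = bern (1/2) := by
    intro j
    have hj : Measurable (fun x : Fin d → ℝ => x j) := measurable_pi_apply j
    rw [← Measure.mapₗ_apply_of_measurable hj, map_sum]
    have : ∀ l, Measure.mapₗ (fun x : Fin d → ℝ => x j) (ν l)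
        = ENNReal.ofReal (α l) • bern (1/2) := by
      intro l
      rw [Measure.mapₗ_apply_of_measurable hj, bern_half_eq]
      simp only [ν, Measure.map_smul, Measure.map_add _ _ hj, Measure.map_dirac' hj]
      congr 2
      cases hb : bbit d l j <;> simp [bvec, hb, add_comm]
    simp_rw [this]
    rw [← Finset.sum_smul, hs, one_smul]
  have hprob : IsProbabilityMeasure (∑ l, ν l) := by
    constructor
    have h2 : ENNReal.ofReal (1/2) * (1 + 1) = 1 := by
      rw [one_add_one_eq_two, ← ENNReal.ofReal_ofNat, ← ENNReal.ofReal_mul (by norm_num)]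
      norm_num
    simp only [ν, Measure.finsetSum_apply, Measure.smul_apply, Measure.add_apply, measure_univ,
      smul_eq_mul, h2, mul_one, hs]
  refine ⟨∑ l, ν l, hprob, hm, fun i j => ?_⟩
  have hI : ∀ (f : (Fin d → ℝ) → ℝ) (a : Fin d → ℝ), Integrable f (Measure.dirac a) :=
    fun f a => integrable_dirac (by simp)
  have e : ∫ x, (if x i = x j then (1:ℝ) else 0) ∂(∑ l, ν l) = (P i j + 1) / 2 := by
    rw [← h i j, integral_finsetSum_measure]
    · refine Finset.sum_congr rfl (fun l _ => ?_)
      simp only [ν]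
      rw [integral_smul_measure, integral_smul_measure, integral_add_measure (hI _ _) (hI _ _),
        integral_dirac, integral_dirac, ENNReal.toReal_ofReal (h0 l),
        ENNReal.toReal_ofReal (by norm_num)]
      cases hb : bbit d l i <;> cases hb' : bbit d l j <;> simp [bvec, hb, hb'] <;> norm_num
    · intro l _
      exact (((hI _ _).add_measure (hI _ _)).smul_measure (by simp)).smul_measure (by simp)
  rw [marg_agree hm] at e
  linarith

/-- a symmetric matrix `P ∈ [−1,1]^{d×d}` with unit diagonal is the
correlation matrix of a random vector with `Bern(1/2)` margins iff there exist
`α_1, …, α_{2^{d−1}} ≥ 0` with `Σ_l α_l = 1` and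
`Σ_l α_l·1{b_i(l) = b_j(l)} = (ρ_{ij} + 1)/2` for all `i < j`. -/
theorem bernoulli_compatibility_linear_program (d : ℕ)
    (P : Matrix (Fin d) (Fin d) ℝ) (hsym : P.IsSymm)
    (hrange : ∀ i j, P i j ∈ Set.Icc (-1:ℝ) 1) (hdiag : ∀ i, P i i = 1) :
    P ∈ PBd d ↔
      ∃ α : Fin (2^(d-1)) → ℝ, (∀ l, 0 ≤ α l) ∧ (∑ l, α l = 1) ∧
        ∀ i j : Fin d, i < j →
          (∑ l, α l * (if bbit d (l : ℕ) i = bbit d (l : ℕ) j then (1:ℝ) else 0))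
            = (P i j + 1) / 2 := by
  constructor
  · intro hP
    cases d with
    | zero => exact ⟨fun _ => 1, fun _ => zero_le_one, by simp, fun i => i.elim0⟩
    | succ n => exact fwd n P hP
  · rintro ⟨α, h0, h1, h⟩
    refine bwd d P α h0 h1 (fun i j => ?_)
    rcases lt_trichotomy i j with hij | hij | hij
    · exact h i j hij
    · subst hij
      simp [h1, hdiag]
    · rw [← hsym.apply i j, ← h j i hij]
      simp only [eq_comm]
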